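/- arXiv:1508.07807 — 3 statements merged into one kernel-verified Lean document; each statement's English description precedes it below -/
import Mathlib

section
/- Let E be a type equipped with a strict ordering < (the strict-order relation of a preorder). For every element a of E, the set of finite multisets f over E with f <_m {a} is a submonoid of the free commutative monoid of multisets: the empty multiset 0 satisfies 0 <_m {a}, and if f <_m {a} and g <_m {a} then f + g <_m {a}. -/
/-!
A multiset `f` satisfies `f <ₘ {a}` if and only if all its elements are strictly below `a`, a
condition that holds for `0` and is stable under sums. For the equivalence: an element whose
multiplicity in `f` exceeds that in `{a}` must be dominated by an `e'` with larger multiplicity in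
`{a}` than in `f`, which forces `e' = a` and `a ∉ f`. Hence if `a ∈ f`, no multiplicity of `f`
exceeds that of `{a}`, so `f = {a}`, which is excluded.
-/

/-- The multiset order of the paper (Section 5.2): `f >ₘ g` iff `f ≠ g` and
for every `e` whose multiplicity in `f` is smaller than in `g`, there exists
`e' > e` whose multiplicity in `f` is greater than in `g`. -/
def MultisetGT {E : Type*} [Preorder E] [DecidableEq E] (f g : Multiset E) : Prop :=
  f ≠ g ∧ ∀ e : E, f.count e < g.count e → ∃ e' : E, e < e' ∧ g.count e' < f.count e'

/-- The description of the down-set of a singleton: `f <ₘ {a}` exactly when every element of `f`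
lies strictly below `a`. -/
theorem multisetGT_singleton_iff {E : Type*} [Preorder E] [DecidableEq E] (a : E)
    (f : Multiset E) : MultisetGT {a} f ↔ ∀ e ∈ f, e < a := by
  constructor
  · rintro ⟨hne, h⟩
    -- The witness above an element with excess multiplicity in `f` can only be `a`.
    have key : ∀ e, Multiset.count e {a} < f.count e → e < a ∧ a ∉ f := by
      intro e he
      obtain ⟨e', hlt, hc⟩ := h e he
      obtain rfl : e' = a := by
        by_contra hn
        simp [hn] at hc
      exact ⟨hlt, by simpa using hc⟩
    have ha : a ∉ f := by
      intro ha
      refine hne (le_antisymm (Multiset.singleton_le.2 ha) (Multiset.le_iff_count.2 fun e => ?_))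
      by_contra hlt
      exact (key e (not_le.1 hlt)).2 ha
    intro e he
    have hea : e ≠ a := fun h' => ha (h' ▸ he)
    refine (key e ?_).1
    rw [Multiset.count_singleton, if_neg hea]
    exact Multiset.count_pos.2 he
  · intro h
    have ha : a ∉ f := fun ha => lt_irrefl a (h a ha)
    refine ⟨fun hf => ha (hf ▸ Multiset.mem_singleton_self a), fun e he => ⟨a, ?_, ?_⟩⟩
    · exact h e (Multiset.count_pos.1 (Nat.zero_lt_of_lt he))
    · simp [Multiset.count_eq_zero_of_notMem ha]

/-- The 'in particular' clause of Lemma `somme_multiset`: the set of multisets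
`f` with `f <ₘ {a}` is a submonoid of the free commutative monoid of multisets. -/
theorem multisetLT_singleton_submonoid {E : Type*} [Preorder E] [DecidableEq E] (a : E) :
    MultisetGT {a} (0 : Multiset E) ∧
      ∀ f g : Multiset E, MultisetGT {a} f → MultisetGT {a} g → MultisetGT {a} (f + g) := by
  simp only [multisetGT_singleton_iff, Multiset.mem_add]
  exact ⟨by simp, fun f g hf hg e he => he.elim (hf e) (hg e)⟩
end

section
/- Let E be a type equipped with a strict ordering < (the strict-order relation of a preorder). The multiset order on finite multisets over E is well-founded if and only if the order on E is well-founded; precisely, the relation f <_m g on Multiset E is well-founded if and only if the relation < on E is well-founded. -/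
theorem MultisetGT.isDershowitzMannaLT {E : Type*} [Preorder E] [DecidableEq E]
    {f g : Multiset E} (h : MultisetGT g f) : Multiset.IsDershowitzMannaLT f g := by
  obtain ⟨hne, h⟩ := h
  refine ⟨f ∩ g, f - g, g - f, ?_, ?_, ?_, ?_⟩
  · intro h0
    -- Since `g ≤ f`, no multiplicity is larger in `g`, so by `h` none is larger in `f` either.
    have hle : g ≤ f := tsub_eq_zero_iff_le.1 h0
    refine hne (le_antisymm hle (Multiset.le_iff_count.2 fun e => ?_))
    by_contra! hlt
    obtain ⟨e', -, he'⟩ := h e hlt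
    exact absurd (Multiset.le_iff_count.1 hle e') (not_le.2 he')
  · ext e
    simp only [Multiset.count_add, Multiset.count_inter, Multiset.count_sub]
    omega
  · ext e
    simp only [Multiset.count_add, Multiset.count_inter, Multiset.count_sub]
    omega
  · intro y hy
    obtain ⟨z, hz, hc⟩ := h y (Multiset.mem_sub.1 hy)
    exact ⟨z, Multiset.mem_sub.2 hc, hz⟩

theorem MultisetGT.singleton_of_lt {E : Type*} [Preorder E] [DecidableEq E]
    {a b : E} (h : a < b) : MultisetGT ({b} : Multiset E) {a} := by
  refine ⟨fun hba => h.ne' (Multiset.singleton_inj.1 hba), fun e he => ⟨b, ?_, ?_⟩⟩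
  · have hea : e ∈ ({a} : Multiset E) := Multiset.count_pos.1 (Nat.zero_lt_of_lt he)
    rwa [Multiset.mem_singleton.1 hea]
  · simp [h.ne']

/-- Dershowitz–Manna: the multiset order `<ₘ` on `Multiset E` is well-founded
if and only if `<` is well-founded on `E`. -/
theorem multisetLT_wellFounded_iff {E : Type*} [Preorder E] [DecidableEq E] :
    WellFounded (fun f g : Multiset E => MultisetGT g f) ↔
      WellFounded ((· < ·) : E → E → Prop) := by
  constructor
  · intro h
    exact Subrelation.wf (fun hab => MultisetGT.singleton_of_lt hab)
      (InvImage.wf (fun a : E => ({a} : Multiset E)) h)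
  · intro h
    have : WellFoundedLT E := ⟨h⟩
    exact Subrelation.wf MultisetGT.isDershowitzMannaLT
      Multiset.wellFounded_isDershowitzMannaLT
end

section
/- Let V and W be quivers and I : V ⥤q W a prefunctor that is injective on vertices and injective on arrows (for all vertices x, y of V, the map on arrows (x ⟶ y) → (I x ⟶ I y) is injective). Then the induced functor between the free categories Paths V ⥤ Paths W is injective on objects and injective on morphisms, and its image is closed by divisors: whenever the image of a path p factors in Paths W as a composite q₁ ≫ q₂, there exist paths p₁, p₂ in Paths V with p = p₁ ≫ p₂ and whose images are q₁ and q₂ respectively. -/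
/-!
Both claims rest on the fact that a nonempty path decomposes uniquely as a last arrow
preceded by a shorter path, and that `mapPath` preserves this decomposition. For injectivity, two
nonempty paths with the same image have last arrows with the same image; injectivity on vertices identifies
the sources of these arrows, injectivity on arrows identifies the arrows themselves, and one
recurses (`mapPath_injective_of_injective`). For divisors, a factorization `q₁.comp q₂` of the image
of `p` is determined by a position along `p`, found by peeling off the last arrows of `q₂`
(`exists_comp_of_mapPath_eq_comp`); this part needs no injectivity.
-/

open CategoryTheory

/-- The functor between free categories on quivers induced by a prefunctor
`I : V ⥤q W`: it acts as `I` on objects and maps a path to the path obtained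
by applying `I` to each arrow. -/
def pathsFunctor {V W : Type*} [Quiver V] [Quiver W] (I : V ⥤q W) :
    Paths V ⥤ Paths W where
  obj x := I.obj x
  map p := I.mapPath p
  map_id _ := rfl
  map_comp p q := I.mapPath_comp p q

theorem mapPath_injective_of_injective {V W : Type*} [Quiver V] [Quiver W] (I : V ⥤q W)
    (hv : Function.Injective I.obj)
    (ha : ∀ x y : V, Function.Injective (fun f : x ⟶ y => I.map f)) {x y : V}
    (p q : Quiver.Path x y) (h : I.mapPath p = I.mapPath q) : p = q := by
  induction p with
  | nil =>
    cases q with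
    | nil => rfl
    | cons q f => cases Quiver.Path.nil_ne_cons _ _ h
  | cons p e ih =>
    cases q with
    | nil => cases Quiver.Path.cons_ne_nil _ _ h
    | cons q f =>
      simp only [Prefunctor.mapPath_cons] at h
      have hb := hv (Quiver.Path.obj_eq_of_cons_eq_cons h)
      subst hb
      have hp := eq_of_heq (Quiver.Path.heq_of_cons_eq_cons h)
      have he := ha _ _ (eq_of_heq (Quiver.Path.hom_heq_of_cons_eq_cons h))
      rw [ih q hp, he]

/-- The image of `mapPath` is closed by divisors. The intermediate vertex `m` is only
propositionally the image of a vertex, hence the heterogeneous equalities. -/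
theorem exists_comp_of_mapPath_eq_comp {V W : Type*} [Quiver V] [Quiver W] (I : V ⥤q W)
    {x y : V} (p : Quiver.Path x y) {m : W} (q₁ : Quiver.Path (I.obj x) m)
    (q₂ : Quiver.Path m (I.obj y)) (h : I.mapPath p = q₁.comp q₂) :
    ∃ (z : V) (_ : m = I.obj z) (p₁ : Quiver.Path x z) (p₂ : Quiver.Path z y),
      p = p₁.comp p₂ ∧ I.mapPath p₁ ≍ q₁ ∧ I.mapPath p₂ ≍ q₂ := by
  induction p with
  | nil =>
    cases q₂ with
    | nil => exact ⟨x, rfl, .nil, .nil, rfl, heq_of_eq h, HEq.rfl⟩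
    | cons q f => cases Quiver.Path.nil_ne_cons _ _ h
  | @cons b c p e ih =>
    cases q₂ with
    | nil => exact ⟨c, rfl, p.cons e, .nil, rfl, heq_of_eq h, HEq.rfl⟩
    | cons q f =>
      simp only [Prefunctor.mapPath_cons, Quiver.Path.comp_cons] at h
      have hb := Quiver.Path.obj_eq_of_cons_eq_cons h
      subst hb
      have hp := eq_of_heq (Quiver.Path.heq_of_cons_eq_cons h)
      have he := eq_of_heq (Quiver.Path.hom_heq_of_cons_eq_cons h)
      obtain ⟨z, rfl, p₁, p₂, rfl, h₁, h₂⟩ := ih q hp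
      refine ⟨z, rfl, p₁, p₂.cons e, rfl, h₁, heq_of_eq ?_⟩
      rw [Prefunctor.mapPath_cons, eq_of_heq h₂, he]

/-- Dimension 1 of Proposition `inject_libres_gen` (Section 2.3): a prefunctor
injective on vertices and arrows induces a functor between the free categories
which is injective on objects and on morphisms, and whose image is closed by
divisors. -/
theorem pathsFunctor_injective_and_image_closed_by_divisors
    {V W : Type*} [Quiver V] [Quiver W] (I : V ⥤q W)
    (hv : Function.Injective I.obj)
    (ha : ∀ x y : V, Function.Injective (fun f : x ⟶ y => I.map f)) :
    Function.Injective (pathsFunctor I).obj ∧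
    (∀ x y : Paths V,
      Function.Injective (fun p : x ⟶ y => (pathsFunctor I).map p)) ∧
    (∀ (x y : Paths V) (p : x ⟶ y) (m : Paths W)
      (q₁ : (pathsFunctor I).obj x ⟶ m) (q₂ : m ⟶ (pathsFunctor I).obj y),
      (pathsFunctor I).map p = q₁ ≫ q₂ →
      ∃ (z : Paths V) (h : (pathsFunctor I).obj z = m) (p₁ : x ⟶ z) (p₂ : z ⟶ y),
        p = p₁ ≫ p₂ ∧ (pathsFunctor I).map p₁ = q₁ ≫ eqToHom h.symm ∧
          (pathsFunctor I).map p₂ = eqToHom h ≫ q₂) := by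
  refine ⟨hv, fun x y p q h => mapPath_injective_of_injective I hv ha p q h, ?_⟩
  intro x y p m q₁ q₂ h
  obtain ⟨z, rfl, p₁, p₂, hp, h₁, h₂⟩ := exists_comp_of_mapPath_eq_comp I p q₁ q₂ h
  refine ⟨z, rfl, p₁, p₂, hp, ?_, ?_⟩
  · exact (eq_of_heq h₁).trans (Category.comp_id q₁).symm
  · exact (eq_of_heq h₂).trans (Category.id_comp q₂).symm
end
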